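/- Let T > 0 and u ∈ VT₁⁺(T). Then |∇u(x)| → 0 as |x| → ∞, and for every x ∈ ℝ^N, |∇u(x)|² ≤ (4π/e) (4πT)^{-(N+2)/2} u(x) ≤ (4π/e) (4πT)^{-N-1}. -/

import Mathlib

open MeasureTheory Filter Metric
open scoped ENNReal NNReal Topology

noncomputable section

/-- Euclidean space `ℝ^N`. -/
abbrev E (N : ℕ) : Type := EuclideanSpace ℝ (Fin N)

/-- The Euclidean heat kernel `H(t,x,y) = (4πt)^{-N/2} exp(-|x-y|²/(4t))`. -/
def heatKernel (N : ℕ) (t : ℝ) (x y : E N) : ℝ :=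
  (4 * Real.pi * t) ^ (-(N : ℝ) / 2) * Real.exp (-‖x - y‖ ^ 2 / (4 * t))

/-- The heat flow `(H_t u₀)(x) = ∫ u₀(y) H(t,x,y) dy`, with `H_0 u₀ = u₀`. -/
def heatFlow (N : ℕ) (u₀ : E N → ℝ) (t : ℝ) (x : E N) : ℝ :=
  if t = 0 then u₀ x else ∫ y, u₀ y * heatKernel N t x y

/-- `VT N T u` means `u ∈ 𝒱𝒯₁⁺(T)`: `u` is `C²`, in `L¹`, positive, of unit mass, and
`2T·Hess(log u)(x)(v,v) + |v|² ≥ 0` for all `x, v`. -/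
def VT (N : ℕ) (T : ℝ) (u : E N → ℝ) : Prop :=
  ContDiff ℝ 2 u ∧ Integrable u volume ∧ (∀ x, 0 < u x) ∧ (∫ x, u x) = 1 ∧
    ∀ x v : E N,
      0 ≤ 2 * T * iteratedFDeriv ℝ 2 (fun y => Real.log (u y)) x ![v, v] + ‖v‖ ^ 2

/-- The Colding–Minicozzi entropy `λ_CM^n[μ]`. -/
def lamCM {N : ℕ} (n : ℕ) (μ : Measure (E N)) : ℝ≥0∞ :=
  ⨆ (ρ : ℝ) (_ : 0 < ρ) (x₀ : E N),
    ENNReal.ofReal ((4 * Real.pi * ρ) ^ (-(n : ℝ) / 2)) *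
      ∫⁻ x, ENNReal.ofReal (Real.exp (-‖x - x₀‖ ^ 2 / (4 * ρ))) ∂μ

/-- The virtual entropy `λ_V^n[μ]`. -/
def lamV {N : ℕ} (n : ℕ) (μ : Measure (E N)) : ℝ≥0∞ :=
  ⨆ (T : ℝ) (_ : 0 < T) (u : E N → ℝ) (_ : VT N T u),
    ENNReal.ofReal ((4 * Real.pi * T) ^ (((N : ℝ) - n) / 2)) *
      ∫⁻ x, ENNReal.ofReal (u x) ∂μ

/-- The Li–Yau weight `W^M_ρ`, expressed as a function of the squared norm `r2 = |x|²`: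
`W^M_ρ(x) = ρ^M (1 + ρ²|x|²/4)^{-M}`. -/
def W (M : ℕ) (ρ r2 : ℝ) : ℝ := ρ ^ M / (1 + ρ ^ 2 * r2 / 4) ^ M

/-- The Li–Yau conformal volume `λ_LY^k[μ]`. -/
def lamLY {N : ℕ} (k : ℕ) (μ : Measure (E N)) : ℝ≥0∞ :=
  ⨆ (ρ : ℝ) (_ : 0 < ρ) (x₀ : E N), ∫⁻ x, ENNReal.ofReal (W k ρ (‖x - x₀‖ ^ 2)) ∂μ

/-- The `k`-dimensional volume `|𝕊^k|` of the unit `k`-sphere, as the `k`-dimensional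
Hausdorff measure of the unit sphere in `ℝ^{k+1}`. -/
def sphereVol (k : ℕ) : ℝ :=
  (μH[(k : ℝ)] (Metric.sphere (0 : EuclideanSpace ℝ (Fin (k + 1))) 1)).toReal

/-- The normalized Li–Yau conformal volume `λ̄_LY^k[μ] = |𝕊^k|⁻¹ λ_LY^k[μ]`. -/
def lamLYbar {N : ℕ} (k : ℕ) (μ : Measure (E N)) : ℝ≥0∞ :=
  ENNReal.ofReal ((sphereVol k)⁻¹) * lamLY k μ

/-- The Li–Yau conformal volume `λ_LY^k[μ ⊗ L^{2m}]` of the product of `μ` with Lebesgue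
measure on `ℝ^{2m}` (the squared Euclidean norm on `ℝ^{N+2m}` of `(y,z)-(y₀,z₀)` is
`|y-y₀|² + |z-z₀|²`). -/
def lamLYProd {N : ℕ} (k : ℕ) (μ : Measure (E N)) (m : ℕ) : ℝ≥0∞ :=
  ⨆ (ρ : ℝ) (_ : 0 < ρ) (y₀ : E N) (z₀ : E (2 * m)),
    ∫⁻ p : E N × E (2 * m),
      ENNReal.ofReal (W k ρ (‖p.1 - y₀‖ ^ 2 + ‖p.2 - z₀‖ ^ 2)) ∂(μ.prod volume)

/-- The normalized Li–Yau conformal volume `λ̄_LY^k[μ ⊗ L^{2m}]`. -/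
def lamLYbarProd {N : ℕ} (k : ℕ) (μ : Measure (E N)) (m : ℕ) : ℝ≥0∞ :=
  ENNReal.ofReal ((sphereVol k)⁻¹) * lamLYProd k μ m

/-- The constant `C_{M,m} = (4π)^m (M+m-1)!/(M+2m-1)!`. -/
def Cconst (M m : ℕ) : ℝ :=
  (4 * Real.pi) ^ m * (Nat.factorial (M + m - 1) : ℝ) / (Nat.factorial (M + 2 * m - 1) : ℝ)

/-- The modified weight `Ŵ^n_{M,ρ}(x) = (4πρ)^{-n/2} (1 + |x|²/(4Mρ))^{-M}`, as a function
of the squared norm `r2 = |x|²`. -/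
def What (n M : ℕ) (ρ r2 : ℝ) : ℝ :=
  (4 * Real.pi * ρ) ^ (-(n : ℝ) / 2) / (1 + r2 / (4 * (M : ℝ) * ρ)) ^ M

/-- The constant `Ĉ_{n,m} = (4π/(n+m))^{n/2} |𝕊^{n+2m}|⁻¹ C_{n,m}`. -/
def Chat (n m : ℕ) : ℝ :=
  (4 * Real.pi / ((n : ℝ) + m)) ^ ((n : ℝ) / 2) * (sphereVol (n + 2 * m))⁻¹ * Cconst n m

lemma aux_gauss {N : ℕ} {b c : ℝ} (hb : 0 < b) (x p : E N) (w : E N → ℝ)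
    (hw : Integrable w volume)
    (h : ∀ y, c * Real.exp (inner ℝ p (y - x) - b * ‖y - x‖ ^ 2) ≤ w y) :
    c * ((Real.pi / b) ^ ((N : ℝ) / 2) * Real.exp (‖p‖ ^ 2 / (4 * b))) ≤ ∫ y, w y := by
  have hG : ∫ v : E N, Real.exp (-b * ‖v‖ ^ 2) = (Real.pi / b) ^ ((N : ℝ) / 2) := by
    have := GaussianFourier.integral_rexp_neg_mul_sq_norm (V := E N) hb
    simpa using this
  have hGpos : 0 < (Real.pi / b) ^ ((N : ℝ) / 2) := by positivity
  have hI : Integrable (fun v : E N => Real.exp (-b * ‖v‖ ^ 2)) :=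
    Integrable.of_integral_ne_zero (by rw [hG]; exact hGpos.ne')
  set q : E N := x + (1 / (2 * b)) • p with hq
  have hsq : ∀ y : E N, c * Real.exp (inner ℝ p (y - x) - b * ‖y - x‖ ^ 2)
      = c * Real.exp (‖p‖ ^ 2 / (4 * b)) * Real.exp (-b * ‖y - q‖ ^ 2) := by
    intro y
    rw [mul_assoc, ← Real.exp_add]
    congr 2
    have : y - q = (y - x) - (1 / (2 * b)) • p := by rw [hq]; abel
    rw [this, norm_sub_sq_real (y - x), inner_smul_right, norm_smul, real_inner_comm,
      Real.norm_of_nonneg (by positivity)]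
    field_simp
    ring
  have hI2 : Integrable (fun y : E N => c * Real.exp (‖p‖ ^ 2 / (4 * b)) *
      Real.exp (-b * ‖y - q‖ ^ 2)) := (hI.comp_sub_right q).const_mul _
  have hle := integral_mono hI2 hw (fun y => by rw [← hsq]; exact h y)
  rw [integral_const_mul, integral_sub_right_eq_self (fun v : E N => Real.exp (-b * ‖v‖ ^ 2)) q,
    hG] at hle
  calc _ = _ := by ring
    _ ≤ _ := hle

lemma aux_tangent {N : ℕ} {T : ℝ} (hT : 0 < T) {f : E N → ℝ} (hf : ContDiff ℝ 2 f)
    (h : ∀ x v : E N, 0 ≤ 2 * T * iteratedFDeriv ℝ 2 f x ![v, v] + ‖v‖ ^ 2) (x y : E N) :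
    f x + fderiv ℝ f x (y - x) - 1 / (4 * T) * ‖y - x‖ ^ 2 ≤ f y := by
  set v := y - x with hv
  have hl : ∀ t : ℝ, HasDerivAt (fun t : ℝ => x + t • v) v t := fun t => by
    simpa using ((hasDerivAt_id t).smul_const v).const_add x
  have hf1 : ContDiff ℝ 1 (fderiv ℝ f) := hf.fderiv_right (by norm_num)
  have h1 : ∀ t : ℝ, HasDerivAt (fun t : ℝ => f (x + t • v) + t ^ 2 * (1 / (4 * T) * ‖v‖ ^ 2))
      (fderiv ℝ f (x + t • v) v + 2 * t * (1 / (4 * T) * ‖v‖ ^ 2)) t := fun t => by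
    have a := ((hf.differentiable (by norm_num)) (x + t • v)).hasFDerivAt.comp_hasDerivAt t (hl t)
    have b := (hasDerivAt_pow 2 t).mul_const (1 / (4 * T) * ‖v‖ ^ 2)
    exact (a.add b).congr_deriv (by simp)
  have h2 : ∀ t : ℝ, HasDerivAt
      (fun t : ℝ => fderiv ℝ f (x + t • v) v + 2 * t * (1 / (4 * T) * ‖v‖ ^ 2))
      (fderiv ℝ (fderiv ℝ f) (x + t • v) v v + 2 * (1 / (4 * T) * ‖v‖ ^ 2)) t := fun t => by
    have a := ((hf1.differentiable (by norm_num)) (x + t • v)).hasFDerivAt.comp_hasDerivAt t (hl t)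
    have a' := a.clm_apply (hasDerivAt_const t v)
    have b := ((hasDerivAt_id t).const_mul 2).mul_const (1 / (4 * T) * ‖v‖ ^ 2)
    exact (a'.add b).congr_deriv (by simp)
  have hmono := monotone_of_deriv_nonneg (fun t => (h2 t).differentiableAt) (fun t => by
    rw [(h2 t).deriv]
    have := h (x + t • v) v
    rw [iteratedFDeriv_two_apply] at this
    simp only [Matrix.cons_val_zero, Matrix.cons_val_one] at this
    have e : fderiv ℝ (fderiv ℝ f) (x + t • v) v v + 2 * (1 / (4 * T) * ‖v‖ ^ 2)
      = (2 * T * fderiv ℝ (fderiv ℝ f) (x + t • v) v v + ‖v‖ ^ 2) / (2 * T) := by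
      field_simp; ring
    rw [e]; positivity)
  obtain ⟨c, hc, hce⟩ := exists_hasDerivAt_eq_slope _ _ (zero_lt_one' ℝ)
    (fun t _ => (h1 t).continuousAt.continuousWithinAt) (fun t _ => h1 t)
  have := hmono hc.1.le
  simp only [] at this
  rw [hce] at this
  have hxy : x + v = y := by rw [hv]; abel
  simp [hxy] at this
  simp
  linarith

lemma aux_log {N : ℕ} {T : ℝ} (hT : 0 < T) {u : E N → ℝ} (hu : VT N T u) (x y : E N) :
    u x * Real.exp (inner ℝ ((u x)⁻¹ • gradient u x) (y - x) - 1 / (4 * T) * ‖y - x‖ ^ 2)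
      ≤ u y := by
  obtain ⟨hc, hi, hpos, h1, hH⟩ := hu
  have hf : ContDiff ℝ 2 (fun y => Real.log (u y)) := hc.log (fun y => (hpos y).ne')
  have := aux_tangent hT hf hH x y
  have hd : fderiv ℝ (fun y => Real.log (u y)) x (y - x)
      = inner ℝ ((u x)⁻¹ • gradient u x) (y - x) := by
    rw [fderiv.log (hc.differentiable (by norm_num) x) (hpos x).ne', real_inner_smul_left,
      ← InnerProductSpace.toDual_apply_apply (𝕜 := ℝ), toDual_gradient]
    simp
  rw [hd] at this
  have := Real.exp_le_exp.2 this
  rw [Real.exp_log (hpos y), add_sub_assoc, Real.exp_add, Real.exp_log (hpos x)] at this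
  exact this

lemma aux_bound {N : ℕ} {T : ℝ} (hT : 0 < T) {u : E N → ℝ} (hu : VT N T u) (x : E N) :
    u x * Real.exp (T * ‖(u x)⁻¹ • gradient u x‖ ^ 2) ≤ (4 * Real.pi * T) ^ (-(N : ℝ) / 2) := by
  have := aux_gauss (b := 1 / (4 * T)) (by positivity) x _ u hu.2.1 (aux_log hT hu x)
  rw [hu.2.2.2.1] at this
  have hp := Real.pi_pos
  have e1 : Real.pi / (1 / (4 * T)) = 4 * Real.pi * T := by field_simp
  have e2 : ∀ s : ℝ, s / (4 * (1 / (4 * T))) = T * s := fun s => by field_simp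
  rw [e1, e2] at this
  rw [neg_div, Real.rpow_neg (by positivity), le_inv_comm₀ (by have := hu.2.2.1 x; positivity) (by positivity), ← one_div,
    le_div_iff₀ (by have := hu.2.2.1 x; positivity)]
  linarith

lemma aux_tendsto {N : ℕ} {T : ℝ} (hT : 0 < T) {u : E N → ℝ} (hu : VT N T u) :
    Tendsto u (cocompact (E N)) (nhds 0) := by
  have hcoc : cocompact (E N) = comap norm atTop := by
    rw [comap_norm_atTop, Metric.cobounded_eq_cocompact]
  have hcont : Continuous u := hu.1.continuous
  have hmeas : ∀ x : E N, AEStronglyMeasurable (fun y => u y * Real.exp (-‖y - x‖ ^ 2)) volume :=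
    fun x => by
      apply Continuous.aestronglyMeasurable; fun_prop
  have hbd : ∀ x y : E N, ‖u y * Real.exp (-‖y - x‖ ^ 2)‖ ≤ u y := fun x y => by
    have h1 : Real.exp (-‖y - x‖ ^ 2) ≤ 1 := by
      rw [Real.exp_le_one_iff]; nlinarith [sq_nonneg ‖y - x‖]
    have := hu.2.2.1 y
    rw [Real.norm_of_nonneg (by positivity)]
    nlinarith
  have hint : ∀ x : E N, Integrable (fun y => u y * Real.exp (-‖y - x‖ ^ 2)) volume :=
    fun x => hu.2.1.mono' (hmeas x) (Eventually.of_forall (hbd x))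
  have hlim : Tendsto (fun x : E N => ∫ y, u y * Real.exp (-‖y - x‖ ^ 2)) (cocompact (E N))
      (nhds (∫ _ : E N, (0 : ℝ))) := by
    have : (cocompact (E N)).IsCountablyGenerated := by rw [hcoc]; infer_instance
    refine tendsto_integral_filter_of_dominated_convergence u (Eventually.of_forall hmeas)
      (Eventually.of_forall fun x => Eventually.of_forall (hbd x)) hu.2.1
      (Eventually.of_forall fun y => ?_)
    have ht : Tendsto (fun x : E N => ‖y - x‖) (cocompact (E N)) atTop := by
      have hn : Tendsto (fun x : E N => ‖x‖ - ‖y‖) (cocompact (E N)) atTop :=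
        tendsto_atTop_add_const_right _ (-‖y‖) (tendsto_norm_cocompact_atTop)
      refine tendsto_atTop_mono (fun x => ?_) hn
      rw [norm_sub_rev]; exact norm_sub_norm_le x y
    have h2 : Tendsto (fun x : E N => Real.exp (-‖y - x‖ ^ 2)) (cocompact (E N)) (nhds 0) :=
      Real.tendsto_exp_neg_atTop_nhds_zero.comp ((tendsto_pow_atTop two_ne_zero).comp ht)
    simpa using h2.const_mul (u y)
  set b : ℝ := 1 / (4 * T) + 1 with hb
  have hb0 : 0 < b := by positivity
  set C : ℝ := (Real.pi / b) ^ ((N : ℝ) / 2) with hC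
  have hC0 : 0 < C := by have := Real.pi_pos; positivity
  have key : ∀ x, u x ≤ C⁻¹ * ∫ y, u y * Real.exp (-‖y - x‖ ^ 2) := fun x => by
    have := aux_gauss hb0 x ((u x)⁻¹ • gradient u x) (c := u x) _ (hint x) (fun y => by
      have h := aux_log hT hu x y
      have h' := mul_le_mul_of_nonneg_right h (Real.exp_pos (-‖y - x‖ ^ 2)).le
      refine le_trans (le_of_eq ?_) h'
      rw [mul_assoc, ← Real.exp_add]
      congr 2
      rw [hb]; ring)
    rw [inv_mul_eq_div, le_div_iff₀ hC0]
    refine le_trans ?_ this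
    refine mul_le_mul_of_nonneg_left ?_ (hu.2.2.1 x).le
    have : 1 ≤ Real.exp (‖(u x)⁻¹ • gradient u x‖ ^ 2 / (4 * b)) :=
      Real.one_le_exp (by positivity)
    nlinarith
  refine squeeze_zero (fun x => (hu.2.2.1 x).le) key ?_
  simpa using hlim.const_mul C⁻¹

/-- for `u ∈ 𝒱𝒯₁⁺(T)`, `|∇u| → 0` at infinity and
`|∇u(x)|² ≤ (4π/e)(4πT)^{-(N+2)/2} u(x) ≤ (4π/e)(4πT)^{-N-1}`. -/
theorem statement_3 (N : ℕ) (T : ℝ) (hT : 0 < T) (u : E N → ℝ) (hu : VT N T u) :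
    Tendsto (fun x => ‖gradient u x‖) (cocompact (E N)) (nhds 0) ∧
      ∀ x : E N,
        ‖gradient u x‖ ^ 2 ≤
            4 * Real.pi / Real.exp 1 *
              ((4 * Real.pi * T) ^ (-((N : ℝ) + 2) / 2)) * u x ∧
        4 * Real.pi / Real.exp 1 * ((4 * Real.pi * T) ^ (-((N : ℝ) + 2) / 2)) * u x ≤
          4 * Real.pi / Real.exp 1 * ((4 * Real.pi * T) ^ (-(N : ℝ) - 1)) := by
  have hp := Real.pi_pos
  have hA : 0 < 4 * Real.pi * T := by positivity
  have he : (4 * Real.pi * T) ^ (-((N : ℝ) + 2) / 2)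
      = (4 * Real.pi * T) ^ (-(N : ℝ) / 2) * (4 * Real.pi * T)⁻¹ := by
    rw [← Real.rpow_neg_one, ← Real.rpow_add hA]; congr 1; ring
  have he2 : (4 * Real.pi * T) ^ (-(N : ℝ) - 1)
      = (4 * Real.pi * T) ^ (-((N : ℝ) + 2) / 2) * (4 * Real.pi * T) ^ (-(N : ℝ) / 2) := by
    rw [← Real.rpow_add hA]; congr 1; ring
  have main : ∀ x : E N,
        ‖gradient u x‖ ^ 2 ≤
            4 * Real.pi / Real.exp 1 *
              ((4 * Real.pi * T) ^ (-((N : ℝ) + 2) / 2)) * u x := by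
    intro x
    have hux := hu.2.2.1 x
    have hb := aux_bound hT hu x
    set s := ‖(u x)⁻¹ • gradient u x‖ ^ 2 with hs
    have hg : ‖gradient u x‖ ^ 2 = u x ^ 2 * s := by
      rw [hs, norm_smul, Real.norm_of_nonneg (by positivity)]; field_simp
    have hs0 : 0 ≤ s := by positivity
    set K := (4 * Real.pi * T) ^ (-(N : ℝ) / 2) with hK
    have h1 : Real.exp 1 * (T * s) ≤ Real.exp (T * s) := by
      have := Real.add_one_le_exp (T * s - 1)
      have h3 : Real.exp (T * s) = Real.exp 1 * Real.exp (T * s - 1) := by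
        rw [← Real.exp_add]; congr 1; ring
      rw [h3]
      exact mul_le_mul_of_nonneg_left (by linarith) (Real.exp_pos 1).le
    have h2 : u x * (Real.exp 1 * (T * s)) ≤ K :=
      (mul_le_mul_of_nonneg_left h1 hux.le).trans hb
    rw [hg, he]
    have e : 4 * Real.pi / Real.exp 1 * (K * (4 * Real.pi * T)⁻¹) * u x
        = u x * (K / (Real.exp 1 * T)) := by field_simp
    rw [e, pow_two, mul_assoc]
    refine mul_le_mul_of_nonneg_left ?_ hux.le
    rw [le_div_iff₀ (by positivity)]
    linarith
  refine ⟨?_, fun x => ⟨main x, ?_⟩⟩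
  · have h0 := (aux_tendsto hT hu).const_mul
      (4 * Real.pi / Real.exp 1 * ((4 * Real.pi * T) ^ (-((N : ℝ) + 2) / 2)))
    rw [mul_zero] at h0
    have h1 := squeeze_zero (fun x => sq_nonneg ‖gradient u x‖) main h0
    have h2 := h1.sqrt
    simpa using h2
  · rw [he2, ← mul_assoc]
    refine mul_le_mul_of_nonneg_left ?_ (by positivity)
    refine le_trans ?_ (aux_bound hT hu x)
    exact le_mul_of_one_le_right (hu.2.2.1 x).le (Real.one_le_exp (by positivity))
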